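/- Let n ≥ 2, let u, v ∈ ℝ^{2n} with ω(u, v) = 1, set V = Span(u, v), and let U' = {g ∈ Sp(2n, ℝ) : g u = u and g v = v} be the pointwise stabilizer of u and v. If L ⊂ ℝ^{2n} is a one-dimensional linear subspace with g L = L for every g ∈ U', then L ⊆ V. -/

import Mathlib

def idx1 (n : ℕ) (j : Fin n) : Fin (2 * n) :=
  ⟨2 * j.val, by have := j.isLt; omega⟩

def idx2 (n : ℕ) (j : Fin n) : Fin (2 * n) :=
  ⟨2 * j.val + 1, by have := j.isLt; omega⟩

def omegaJ {R : Type*} [CommRing R] (n : ℕ) (j : Fin n) (u v : Fin (2 * n) → R) : R :=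
  u (idx1 n j) * v (idx2 n j) - u (idx2 n j) * v (idx1 n j)

def omegaForm {R : Type*} [CommRing R] (n : ℕ) (u v : Fin (2 * n) → R) : R :=
  ∑ j : Fin n, omegaJ n j u v

def IsSymplectic {R : Type*} [CommRing R] (n : ℕ)
    (g : Matrix (Fin (2 * n)) (Fin (2 * n)) R) : Prop :=
  ∀ x y : Fin (2 * n) → R, omegaForm n (g.mulVec x) (g.mulVec y) = omegaForm n x y

/-!
For `w` orthogonal to `u` and `v`, the symplectic transvection `x ↦ x + ω(w, x) w` fixes `u` and
`v`, so it preserves `L`. If `x ∈ L`, then `x` and `x + ω(w, x) w` both lie on `L`, on which `ω`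
vanishes, so `0 = ω(x + ω(w, x) w, x) = ω(w, x)²`. Hence `L` is orthogonal to the orthogonal
complement of `Span(u, v)`, and `ω` being nondegenerate, the double complement is `Span(u, v)`.
-/

open LinearMap (BilinForm transvection)

section Transvection

variable {R M : Type*} [CommRing R] [AddCommGroup M] [Module R M] {B : BilinForm R M}

theorem le_orthogonal_self_of_isPrincipal (hB : B.IsAlt) (L : Submodule R M) [L.IsPrincipal] :
    L ≤ B.orthogonal L := by
  intro y hy x hx
  obtain ⟨a, rfl⟩ := (Submodule.IsPrincipal.mem_iff_eq_smul_generator L).1 hx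
  obtain ⟨b, rfl⟩ := (Submodule.IsPrincipal.mem_iff_eq_smul_generator L).1 hy
  simp [hB.self_eq_zero]

theorem apply_transvection_transvection (hB : B.IsAlt) (w x y : M) :
    B (transvection (B w) w x) (transvection (B w) w y) = B x y := by
  simp only [transvection.apply, map_add, map_smul, LinearMap.add_apply, LinearMap.smul_apply,
    smul_eq_mul, hB.self_eq_zero, ← hB.neg_eq w x]
  ring

theorem apply_eq_zero_of_transvection_mem [IsReduced R] (hB : B.IsAlt) {L : Submodule R M}
    (hL : L ≤ B.orthogonal L) {w x : M} (hx : x ∈ L) (hwx : transvection (B w) w x ∈ L) :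
    B w x = 0 := by
  have hsq : B w x ^ 2 = 0 := by
    calc B w x ^ 2 = B (transvection (B w) w x) x := by
          simp [transvection.apply, hB.self_eq_zero, sq]
      _ = 0 := hL hx _ hwx
  exact (pow_eq_zero_iff two_ne_zero).1 hsq

theorem le_orthogonal_of_transvection_mem [IsReduced R] (hB : B.IsAlt) {L W : Submodule R M}
    (hL : L ≤ B.orthogonal L) (hLW : ∀ w ∈ W, ∀ x ∈ L, transvection (B w) w x ∈ L) :
    L ≤ B.orthogonal W :=
  fun x hx w hw => apply_eq_zero_of_transvection_mem hB hL hx (hLW w hw x hx)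

end Transvection

section StandardForm

variable {R : Type*} [CommRing R] {n : ℕ}

theorem idx1_injective : Function.Injective (idx1 n) := fun i j h => by
  simpa [idx1, Fin.ext_iff] using h

theorem idx2_injective : Function.Injective (idx2 n) := fun i j h => by
  simpa [idx2, Fin.ext_iff] using h

theorem idx1_ne_idx2 (i j : Fin n) : idx1 n i ≠ idx2 n j := by
  simp only [idx1, idx2, ne_eq, Fin.ext_iff]
  omega

theorem exists_eq_idx1_or_eq_idx2 (i : Fin (2 * n)) : ∃ j, i = idx1 n j ∨ i = idx2 n j :=
  ⟨⟨i / 2, by omega⟩, by simp only [idx1, idx2, Fin.ext_iff]; omega⟩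

theorem omegaForm_single_idx1 (j : Fin n) (y : Fin (2 * n) → R) :
    omegaForm n (Pi.single (idx1 n j) 1) y = y (idx2 n j) := by
  simp [omegaForm, omegaJ, Pi.single_apply, idx1_injective.eq_iff, (idx1_ne_idx2 _ _).symm]

theorem omegaForm_single_idx2 (j : Fin n) (y : Fin (2 * n) → R) :
    omegaForm n (Pi.single (idx2 n j) 1) y = -y (idx1 n j) := by
  simp [omegaForm, omegaJ, Pi.single_apply, idx2_injective.eq_iff, idx1_ne_idx2]

variable (R n) in
/-- The standard symplectic form `ω = omegaForm n` on `R^{2n}`, bundled as a bilinear form so that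
Mathlib's orthogonal complements and transvections apply to it. -/
def omegaBilin : BilinForm R (Fin (2 * n) → R) :=
  ∑ j, (BilinForm.linMulLin (.proj (idx1 n j)) (.proj (idx2 n j)) -
    BilinForm.linMulLin (.proj (idx2 n j)) (.proj (idx1 n j)))

theorem omegaBilin_apply (x y : Fin (2 * n) → R) : omegaBilin R n x y = omegaForm n x y := by
  simp [omegaBilin, omegaForm, omegaJ, LinearMap.sum_apply]

theorem omegaBilin_isAlt : (omegaBilin R n).IsAlt := fun x => by
  simp [omegaBilin_apply, omegaForm, omegaJ, mul_comm]

theorem omegaBilin_isRefl : (omegaBilin R n).IsRefl := omegaBilin_isAlt.isRefl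

theorem omegaBilin_nondegenerate : (omegaBilin R n).Nondegenerate := by
  refine (LinearMap.IsRefl.nondegenerate_iff_separatingRight (B := omegaBilin R n)
    omegaBilin_isRefl).2 fun y hy => ?_
  ext i
  obtain ⟨j, rfl | rfl⟩ := exists_eq_idx1_or_eq_idx2 i
  · simpa [omegaBilin_apply, omegaForm_single_idx2] using hy (Pi.single (idx2 n j) 1)
  · simpa [omegaBilin_apply, omegaForm_single_idx1] using hy (Pi.single (idx1 n j) 1)

theorem isSymplectic_toMatrix'_transvection (w : Fin (2 * n) → R) :
    IsSymplectic n (LinearMap.toMatrix' (transvection (omegaBilin R n w) w)) := fun x y => by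
  simpa only [LinearMap.toMatrix'_mulVec, omegaBilin_apply] using
    apply_transvection_transvection omegaBilin_isAlt w x y

end StandardForm

theorem invariant_line_in_span_general {K : Type*} [Field K] {n : ℕ}
    (S : Set (Fin (2 * n) → K)) (L : Submodule K (Fin (2 * n) → K))
    (hL : L ≤ (omegaBilin K n).orthogonal L)
    (hinv : ∀ g : Matrix (Fin (2 * n)) (Fin (2 * n)) K,
      IsSymplectic n g → (∀ s ∈ S, g.mulVec s = s) → L.map g.mulVecLin ≤ L) :
    L ≤ Submodule.span K S := by
  rw [← BilinForm.orthogonal_orthogonal omegaBilin_nondegenerate omegaBilin_isRefl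
    (Submodule.span K S)]
  refine le_orthogonal_of_transvection_mem omegaBilin_isAlt hL fun w hw x hx => ?_
  have hfix : ∀ s ∈ S, transvection (omegaBilin K n w) w s = s := fun s hs => by
    have hws : omegaBilin K n w s = 0 := omegaBilin_isRefl _ _ (hw s (Submodule.subset_span hs))
    simp [transvection.apply, hws]
  have hmap := hinv _ (isSymplectic_toMatrix'_transvection w)
    (by simpa only [LinearMap.toMatrix'_mulVec] using hfix)
  simpa only [Matrix.mulVecLin_apply, LinearMap.toMatrix'_mulVec] using
    hmap (Submodule.mem_map_of_mem hx)

/-- For `n ≥ 2` and `u, v ∈ ℝ^{2n}` with `ω(u, v) = 1`, any line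
`L ⊂ ℝ^{2n}` invariant under the pointwise stabilizer
`U' = {g ∈ Sp(2n, ℝ) : gu = u, gv = v}` is contained in `V = Span(u, v)`. -/
theorem invariant_line_in_span (n : ℕ) (hn : 2 ≤ n)
    (u v : Fin (2 * n) → ℝ) (huv : omegaForm n u v = 1)
    (L : Submodule ℝ (Fin (2 * n) → ℝ)) (hL : Module.finrank ℝ L = 1)
    (hinv : ∀ g : Matrix (Fin (2 * n)) (Fin (2 * n)) ℝ,
      IsSymplectic n g → g.mulVec u = u → g.mulVec v = v →
        L.map (Matrix.mulVecLin g) = L) :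
    L ≤ Submodule.span ℝ ({u, v} : Set (Fin (2 * n) → ℝ)) := by
  have := L.finrank_le_one_iff_isPrincipal.1 hL.le
  exact invariant_line_in_span_general {u, v} L
    (le_orthogonal_self_of_isPrincipal omegaBilin_isAlt L) fun g hg hfix =>
      (hinv g hg (hfix u (by simp)) (hfix v (by simp))).le
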